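/- arXiv:2503.02273 — 4 statements merged into one kernel-verified Lean document; each statement's English description precedes it below -/
import Mathlib

section
/- Let n be a positive integer, D a symmetric n×n real matrix, and κ, κ̄ real numbers with κ ≠ 0. Suppose q, p, w₁, w₂ : ℝ → ℝⁿ are differentiable functions satisfying for all t the lifted full-order-model equations q′(t) = p(t), p′(t) = D q(t) − κ̄ (w₁(t) ⊙ w₂(t)), and w₁′(t) = (κ²κ̄/2) (w₂(t) ⊙ p(t)). Then the lifted energy t ↦ ½ p(t)ᵀp(t) − ½ q(t)ᵀD q(t) + (1/κ²) w₁(t)ᵀw₁(t) is constant in t. -/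
/-!
The derivative of the energy is
`p ⬝ᵥ p' - p ⬝ᵥ D q + (2 / κ²) * (w₁ ⬝ᵥ w₁')`, where the symmetry of `D` merges the two terms coming
from the quadratic form in `q`. Substituting the equations of motion, the stiffness terms cancel,
and the remaining terms are `-κb * (p ⬝ᵥ (w₁ ⊙ w₂))` and `κb * (w₁ ⬝ᵥ (w₂ ⊙ p))`, which cancel as
well: both dot products are `∑ i, w₁ᵢ w₂ᵢ pᵢ`. A function on `ℝ` with zero derivative is constant.
-/

open Matrix BigOperators

theorem hasDerivAt_dotProduct {n : ℕ} {u v : ℝ → Fin n → ℝ} {u' v' : Fin n → ℝ} {t : ℝ}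
    (hu : HasDerivAt u u' t) (hv : HasDerivAt v v' t) :
    HasDerivAt (fun s => u s ⬝ᵥ v s) (u' ⬝ᵥ v t + u t ⬝ᵥ v') t := by
  simp only [dotProduct, ← Finset.sum_add_distrib]
  exact HasDerivAt.fun_sum fun i _ => (hasDerivAt_pi.1 hu i).mul (hasDerivAt_pi.1 hv i)

theorem hasDerivAt_mulVec {n : ℕ} (D : Matrix (Fin n) (Fin n) ℝ) {u : ℝ → Fin n → ℝ}
    {u' : Fin n → ℝ} {t : ℝ} (hu : HasDerivAt u u' t) :
    HasDerivAt (fun s => D.mulVec (u s)) (D.mulVec u') t := by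
  refine hasDerivAt_pi.2 fun i => ?_
  simpa [mulVec] using hasDerivAt_dotProduct (hasDerivAt_const t (D i)) hu

/-- Full-order conservation property of the general lifted quadratic system produced
by the paper's energy-quadratization strategy. -/
theorem lifted_fom_energy_quadratization_conserves_energy
    (n : ℕ) (hn : 0 < n)
    (D : Matrix (Fin n) (Fin n) ℝ) (hD : D.IsSymm)
    (κ κb : ℝ) (hκ : κ ≠ 0)
    (q p w1 w2 : ℝ → Fin n → ℝ)
    (hq : ∀ t, HasDerivAt q (p t) t)
    (hp : ∀ t, HasDerivAt p
      (D.mulVec (q t) - κb • fun i => w1 t i * w2 t i) t)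
    (hw1 : ∀ t, HasDerivAt w1
      ((κ ^ 2 * κb / 2) • fun i => w2 t i * p t i) t) :
    ∀ s t : ℝ,
      (1 / 2) * (p s ⬝ᵥ p s) - (1 / 2) * (q s ⬝ᵥ D.mulVec (q s))
        + (1 / κ ^ 2) * (w1 s ⬝ᵥ w1 s)
      = (1 / 2) * (p t ⬝ᵥ p t) - (1 / 2) * (q t ⬝ᵥ D.mulVec (q t))
        + (1 / κ ^ 2) * (w1 t ⬝ᵥ w1 t) := by
  have hE : ∀ t, HasDerivAt (fun t => (1 / 2) * (p t ⬝ᵥ p t) - (1 / 2) * (q t ⬝ᵥ D.mulVec (q t))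
        + (1 / κ ^ 2) * (w1 t ⬝ᵥ w1 t)) 0 t := by
    intro t
    have h := (((hasDerivAt_dotProduct (hp t) (hp t)).const_mul (1 / 2)).sub
      ((hasDerivAt_dotProduct (hq t) (hasDerivAt_mulVec D (hq t))).const_mul (1 / 2))).add
      ((hasDerivAt_dotProduct (hw1 t) (hw1 t)).const_mul (1 / κ ^ 2))
    refine h.congr_deriv ?_
    have hsymm : q t ⬝ᵥ D.mulVec (p t) = p t ⬝ᵥ D.mulVec (q t) := by
      rw [dotProduct_mulVec, ← mulVec_transpose, hD.eq, dotProduct_comm]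
    have htriple : w1 t ⬝ᵥ (fun i => w2 t i * p t i) = p t ⬝ᵥ (fun i => w1 t i * w2 t i) :=
      Finset.sum_congr rfl fun i _ => by ring
    rw [dotProduct_comm _ (p t), dotProduct_comm _ (w1 t), hsymm, dotProduct_sub,
      dotProduct_smul, dotProduct_smul, htriple, smul_eq_mul, smul_eq_mul]
    field_simp
    ring
  exact is_const_of_deriv_eq_zero (fun t => (hE t).differentiableAt) fun t => (hE t).deriv
end

section
/- Let n, r be positive integers, D a symmetric n×n real matrix, and Φ, V₁, V₂ n×r real matrices with ΦᵀΦ = I_r, V₁ᵀV₁ = I_r, and V₂ᵀV₂ = I_r. Suppose q̂, p̂, ŵ₁, ŵ₂ : ℝ → ℝʳ are differentiable and satisfy for all t the standard-lifting POD-Galerkin ROM of the one-dimensional sine-Gordon equation: q̂′ = p̂, p̂′ = (ΦᵀDΦ) q̂ − (ΦᵀV₁) ŵ₁, ŵ₁′ = V₁ᵀ(V₂ŵ₂ ⊙ Φp̂), ŵ₂′ = −V₂ᵀ(V₁ŵ₁ ⊙ Φp̂). Then for all t, the derivative of the lifted energy along the reconstructed trajectory satisfies d/dt [ ½ (Φp̂)ᵀ(Φp̂)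 − ½ (Φq̂)ᵀD(Φq̂) + Σᵢ₌₁ⁿ (1 − (V₂ŵ₂)ᵢ) ] = 𝟙ᵀ (V₂V₂ᵀ − I_n)(V₁ŵ₁ ⊙ Φp̂), where 𝟙 ∈ ℝⁿ is the all-ones vector; in particular this derivative need not vanish when r < n. -/
/-!
The chain rule gives the derivative `Φp̂ ⬝ Φp̂' - Φp̂ ⬝ DΦq̂ - 𝟙 ⬝ V₂ŵ₂'`, the symmetry of `D` merging the
two halves of the potential term. Since `ΦᵀΦ = 1`, the first term is
`p̂ ⬝ p̂' = Φp̂ ⬝ DΦq̂ - Φp̂ ⬝ V₁ŵ₁`, so the terms in `D` cancel. What remains is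
`-Φp̂ ⬝ V₁ŵ₁ = -𝟙 ⬝ (V₁ŵ₁ ⊙ Φp̂)` and `-𝟙 ⬝ V₂ŵ₂' = 𝟙 ⬝ V₂V₂ᵀ(V₁ŵ₁ ⊙ Φp̂)`, whose sum is the residual.
-/

open Matrix BigOperators

theorem hasDerivAt_mulVec_s2 {m k : ℕ} (A : Matrix (Fin m) (Fin k) ℝ) {x : ℝ → Fin k → ℝ}
    {x' : Fin k → ℝ} {t : ℝ} (hx : HasDerivAt x x' t) :
    HasDerivAt (fun s => A.mulVec (x s)) (A.mulVec x') t :=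
  (Matrix.mulVecLin A).toContinuousLinearMap.hasFDerivAt.comp_hasDerivAt t hx

theorem hasDerivAt_dotProduct_s2 {m : ℕ} {x y : ℝ → Fin m → ℝ} {x' y' : Fin m → ℝ} {t : ℝ}
    (hx : HasDerivAt x x' t) (hy : HasDerivAt y y' t) :
    HasDerivAt (fun s => x s ⬝ᵥ y s) (x' ⬝ᵥ y t + x t ⬝ᵥ y') t := by
  simp only [dotProduct, ← Finset.sum_add_distrib]
  exact HasDerivAt.fun_sum fun i _ => (hasDerivAt_pi.1 hx i).mul (hasDerivAt_pi.1 hy i)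

/-- `A x ⬝ y = x ⬝ Aᵀ y`. -/
theorem mulVec_dotProduct_eq {m k : ℕ} (A : Matrix (Fin m) (Fin k) ℝ) (x : Fin k → ℝ)
    (y : Fin m → ℝ) : A.mulVec x ⬝ᵥ y = x ⬝ᵥ Aᵀ.mulVec y := by
  rw [dotProduct_comm, dotProduct_mulVec, ← mulVec_transpose, dotProduct_comm]

/-- Standard-lifting POD-Galerkin ROM of the 1D sine-Gordon equation: the derivative of the
lifted energy along the reconstructed trajectory equals the residual
𝟙ᵀ (V₂V₂ᵀ − I)(V₁ŵ₁ ⊙ Φp̂), which need not vanish. -/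
theorem standard_lifting_rom_energy_derivative_residual
    (n r : ℕ) (hn : 0 < n) (hr : 0 < r)
    (D : Matrix (Fin n) (Fin n) ℝ) (hD : D.IsSymm)
    (Φ V₁ V₂ : Matrix (Fin n) (Fin r) ℝ)
    (hΦ : Φᵀ * Φ = 1) (hV₁ : V₁ᵀ * V₁ = 1) (hV₂ : V₂ᵀ * V₂ = 1)
    (qh ph w1h w2h : ℝ → Fin r → ℝ)
    (hq : ∀ t, HasDerivAt qh (ph t) t)
    (hp : ∀ t, HasDerivAt ph
      ((Φᵀ * D * Φ).mulVec (qh t) - (Φᵀ * V₁).mulVec (w1h t)) t)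
    (hw1 : ∀ t, HasDerivAt w1h
      (V₁ᵀ.mulVec (fun i => V₂.mulVec (w2h t) i * Φ.mulVec (ph t) i)) t)
    (hw2 : ∀ t, HasDerivAt w2h
      (-V₂ᵀ.mulVec (fun i => V₁.mulVec (w1h t) i * Φ.mulVec (ph t) i)) t) :
    ∀ t : ℝ,
      HasDerivAt (fun s : ℝ =>
        (1 / 2) * (Φ.mulVec (ph s) ⬝ᵥ Φ.mulVec (ph s))
          - (1 / 2) * (Φ.mulVec (qh s) ⬝ᵥ D.mulVec (Φ.mulVec (qh s)))
          + ∑ i, (1 - V₂.mulVec (w2h s) i))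
        ((fun _ => (1 : ℝ)) ⬝ᵥ
          (V₂ * V₂ᵀ - 1).mulVec (fun i => V₁.mulVec (w1h t) i * Φ.mulVec (ph t) i)) t := by
  intro t
  have hP := hasDerivAt_mulVec_s2 Φ (hp t)
  have hQ := hasDerivAt_mulVec_s2 Φ (hq t)
  have hW := hasDerivAt_mulVec_s2 V₂ (hw2 t)
  have hsum := HasDerivAt.fun_sum (u := Finset.univ)
    fun (i : Fin n) _ => (hasDerivAt_pi.1 hW i).const_sub 1
  have hE := (((hasDerivAt_dotProduct_s2 hP hP).const_mul (1 / 2)).sub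
    ((hasDerivAt_dotProduct_s2 hQ (hasDerivAt_mulVec_s2 D hQ)).const_mul (1 / 2))).add hsum
  refine hE.congr_deriv ?_
  set g : Fin n → ℝ := fun i => V₁.mulVec (w1h t) i * Φ.mulVec (ph t) i with hg
  have hsymm : Φ.mulVec (qh t) ⬝ᵥ D.mulVec (Φ.mulVec (ph t))
      = Φ.mulVec (ph t) ⬝ᵥ D.mulVec (Φ.mulVec (qh t)) := by
    rw [dotProduct_comm, mulVec_dotProduct_eq, hD.eq]
  have hkin : Φ.mulVec (ph t) ⬝ᵥ
        Φ.mulVec ((Φᵀ * D * Φ).mulVec (qh t) - (Φᵀ * V₁).mulVec (w1h t))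
      = Φ.mulVec (ph t) ⬝ᵥ D.mulVec (Φ.mulVec (qh t))
        - Φ.mulVec (ph t) ⬝ᵥ V₁.mulVec (w1h t) := by
    rw [mulVec_dotProduct_eq, mulVec_mulVec, hΦ, one_mulVec, dotProduct_sub,
      mulVec_dotProduct_eq Φ, mulVec_dotProduct_eq Φ]
    simp only [mulVec_mulVec, Matrix.mul_assoc]
  have hdot : Φ.mulVec (ph t) ⬝ᵥ V₁.mulVec (w1h t) = ∑ i, g i :=
    dotProduct_comm _ _
  have hres : (fun _ => (1 : ℝ)) ⬝ᵥ (V₂ * V₂ᵀ - 1).mulVec g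
      = ∑ i, V₂.mulVec (V₂ᵀ.mulVec g) i - ∑ i, g i := by
    simp [sub_mulVec, dotProduct]
  rw [dotProduct_comm (Φ.mulVec (_ - _)), hkin, hsymm, hdot, hres]
  simp only [mulVec_neg, Pi.neg_apply, neg_neg]
  ring
end

section
/- Let n, r be positive integers, D a symmetric n×n real matrix, and Φ, V₁ n×r real matrices with ΦᵀΦ = I_r and V₁ᵀV₁ = I_r. Suppose q̂, p̂, ŵ₁ : ℝ → ℝʳ are differentiable and satisfy for all t the quadratic ROM q̂′ = p̂, p̂′ = (ΦᵀDΦ) q̂ + Φᵀ(V₁ŵ₁ ⊙ V₁ŵ₁), ŵ₁′ = −½ V₁ᵀ(V₁ŵ₁ ⊙ Φp̂). Then the lifted energy along the reconstructed trajectory, t ↦ ½ (Φp̂(t))ᵀ(Φp̂(t)) − ½ (Φq̂(t))ᵀD(Φq̂(t)) + (V₁ŵ₁(t))ᵀ(V₁ŵ₁(t)), is constant in t. -/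
open Matrix BigOperators

/-!
Orthonormality of the columns of `Φ` and `V₁` turns the energy of the reconstructed trajectory into
`½ p·p − ½ q·Kq + w·w` in the reduced coordinates, with `K = ΦᵀDΦ` symmetric. In its derivative the
terms `p·Kq` cancel by symmetry of `K`, and the nonlinear terms are `Φp·(V₁w ⊙ V₁w)` and
`−V₁w·(V₁w ⊙ Φp)`, the same trilinear sum with opposite signs. So the derivative vanishes.
-/

theorem HasDerivAt.dotProduct_real {m : ℕ} {x y : ℝ → Fin m → ℝ} {x' y' : Fin m → ℝ} {t : ℝ}
    (hx : HasDerivAt x x' t) (hy : HasDerivAt y y' t) :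
    HasDerivAt (fun u => x u ⬝ᵥ y u) (x' ⬝ᵥ y t + x t ⬝ᵥ y') t := by
  have h := HasDerivAt.fun_sum (u := Finset.univ)
    (fun i _ => ((hasDerivAt_pi.1 hx) i).mul ((hasDerivAt_pi.1 hy) i))
  rw [Finset.sum_add_distrib] at h
  exact h

theorem HasDerivAt.mulVec_real {k m : ℕ} (A : Matrix (Fin k) (Fin m) ℝ) {x : ℝ → Fin m → ℝ}
    {x' : Fin m → ℝ} {t : ℝ} (hx : HasDerivAt x x' t) :
    HasDerivAt (fun u => A *ᵥ x u) (A *ᵥ x') t :=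
  (Matrix.mulVecLin A).toContinuousLinearMap.hasFDerivAt.comp_hasDerivAt t hx

theorem dotProduct_mulVec_transpose {k m : ℕ} (A : Matrix (Fin k) (Fin m) ℝ) (x : Fin m → ℝ)
    (y : Fin k → ℝ) : x ⬝ᵥ Aᵀ *ᵥ y = A *ᵥ x ⬝ᵥ y := by
  rw [dotProduct_mulVec, vecMul_transpose]

theorem mulVec_dotProduct_mulVec_of_orthonormal {k m : ℕ} {A : Matrix (Fin k) (Fin m) ℝ}
    (hA : Aᵀ * A = 1) (x y : Fin m → ℝ) : A *ᵥ x ⬝ᵥ A *ᵥ y = x ⬝ᵥ y := by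
  rw [← dotProduct_mulVec_transpose, mulVec_mulVec, hA, one_mulVec]

/-- The quadratic ROM of the lifted nonlinear wave equation with exponential nonlinearity
conserves the lifted energy along the reconstructed trajectory. -/
theorem exp_wave_rom_conserves_energy
    (n r : ℕ) (hn : 0 < n) (hr : 0 < r)
    (D : Matrix (Fin n) (Fin n) ℝ) (hD : D.IsSymm)
    (Φ V₁ : Matrix (Fin n) (Fin r) ℝ)
    (hΦ : Φᵀ * Φ = 1) (hV₁ : V₁ᵀ * V₁ = 1)
    (qh ph w1h : ℝ → Fin r → ℝ)
    (hq : ∀ t, HasDerivAt qh (ph t) t)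
    (hp : ∀ t, HasDerivAt ph
      ((Φᵀ * D * Φ).mulVec (qh t)
        + Φᵀ.mulVec (fun i => V₁.mulVec (w1h t) i * V₁.mulVec (w1h t) i)) t)
    (hw1 : ∀ t, HasDerivAt w1h
      (-((1 / 2 : ℝ) • V₁ᵀ.mulVec (fun i => V₁.mulVec (w1h t) i * Φ.mulVec (ph t) i))) t) :
    ∀ s t : ℝ,
      (1 / 2) * (Φ.mulVec (ph s) ⬝ᵥ Φ.mulVec (ph s))
        - (1 / 2) * (Φ.mulVec (qh s) ⬝ᵥ D.mulVec (Φ.mulVec (qh s)))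
        + (V₁.mulVec (w1h s) ⬝ᵥ V₁.mulVec (w1h s))
      = (1 / 2) * (Φ.mulVec (ph t) ⬝ᵥ Φ.mulVec (ph t))
        - (1 / 2) * (Φ.mulVec (qh t) ⬝ᵥ D.mulVec (Φ.mulVec (qh t)))
        + (V₁.mulVec (w1h t) ⬝ᵥ V₁.mulVec (w1h t)) := by
  have hquad : ∀ x : Fin r → ℝ, Φ *ᵥ x ⬝ᵥ D *ᵥ (Φ *ᵥ x) = x ⬝ᵥ (Φᵀ * D * Φ) *ᵥ x := fun x => by
    rw [← dotProduct_mulVec_transpose, mulVec_mulVec, mulVec_mulVec, Matrix.mul_assoc]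
  simp only [mulVec_dotProduct_mulVec_of_orthonormal hΦ,
    mulVec_dotProduct_mulVec_of_orthonormal hV₁, hquad]
  have hK : (Φᵀ * D * Φ)ᵀ = Φᵀ * D * Φ := by
    rw [transpose_mul, transpose_mul, transpose_transpose, hD.eq, Matrix.mul_assoc]
  generalize Φᵀ * D * Φ = K at *
  have hE : ∀ t, HasDerivAt
      (fun u => (1 / 2) * (ph u ⬝ᵥ ph u) - (1 / 2) * (qh u ⬝ᵥ K *ᵥ qh u) + w1h u ⬝ᵥ w1h u) 0 t := by
    intro t
    have h := ((((hp t).dotProduct_real (hp t)).const_mul (1 / 2)).sub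
      (((hq t).dotProduct_real ((hq t).mulVec_real K)).const_mul (1 / 2))).add
      ((hw1 t).dotProduct_real (hw1 t))
    refine h.congr_deriv ?_
    have hsymm : qh t ⬝ᵥ K *ᵥ ph t = ph t ⬝ᵥ K *ᵥ qh t := by
      rw [← hK, dotProduct_mulVec_transpose, dotProduct_comm, hK]
    -- The coupling terms in the two equations are the same sum over the full-order grid.
    have hcpl : V₁ *ᵥ w1h t ⬝ᵥ (fun i => (V₁ *ᵥ w1h t) i * (Φ *ᵥ ph t) i)
        = Φ *ᵥ ph t ⬝ᵥ (fun i => (V₁ *ᵥ w1h t) i * (V₁ *ᵥ w1h t) i) :=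
      Finset.sum_congr rfl fun i _ => by ring
    rw [dotProduct_comm _ (ph t), dotProduct_comm _ (w1h t)]
    simp only [dotProduct_add, dotProduct_neg, dotProduct_smul, dotProduct_mulVec_transpose,
      smul_eq_mul, hcpl, hsymm]
    ring
  exact fun s t => is_const_of_deriv_eq_zero (fun u => (hE u).differentiableAt)
    (fun u => (hE u).deriv) s t
end

section
/- Let n, r be positive integers, D a symmetric n×n real matrix, and Φ, W n×r real matrices with ΦᵀΦ = I_r and WᵀW = I_r. Suppose q̂₁, q̂₂, p̂₁, p̂₂, φ̂, ϕ̂, ŵ : ℝ → ℝʳ are differentiable and satisfy for all t the structure-preserving quadratic ROM of the Klein-Gordon-Zakharov equations (with a joint basis W for φ, ϕ, and w): q̂₁′ = p̂₁, q̂₂′ = p̂₂, p̂₁′ = (ΦᵀDΦ) q̂₁ − q̂₁ − Φᵀ(Wϕ̂ ⊙ Φq̂₁) − Φᵀ(Wŵ ⊙ Φq̂₁), p̂₂′ = (ΦᵀDΦ) q̂₂ − q̂₂ − Φᵀ(Wϕ̂ ⊙ Φq̂₂) − Φᵀ(Wŵ ⊙ Φq̂₂), φ̂′ = ϕ̂ +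 ŵ, ϕ̂′ = (WᵀDW) φ̂, ŵ′ = 2 Wᵀ(Φq̂₁ ⊙ Φp̂₁ + Φq̂₂ ⊙ Φp̂₂). Then the lifted energy along the reconstructed trajectory, t ↦ (Φp̂₁)ᵀ(Φp̂₁) + (Φp̂₂)ᵀ(Φp̂₂) + (Φq̂₁)ᵀ(Φq̂₁) + (Φq̂₂)ᵀ(Φq̂₂) − (Φq̂₁)ᵀD(Φq̂₁) − (Φq̂₂)ᵀD(Φq̂₂) + (Wϕ̂)ᵀ(Wŵ) − ½ (Wφ̂)ᵀD(Wφ̂) + ½ (Wϕ̂)ᵀ(Wϕ̂) + ½ (Wŵ)ᵀ(Wŵ), is constant in t. -/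
/-!
Orthonormality of `Φ` and `W` turns the reconstructed energy into a quadratic form in the reduced
variables, with the symmetric matrices `A = Φᵀ D Φ` and `B = Wᵀ D W` in place of `D`. Its time
derivative is

`2 p₁ ⬝ (p₁' + q₁ - A q₁) + 2 p₂ ⬝ (p₂' + q₂ - A q₂) + (ϕ + w) ⬝ (ϕ' + w' - B φ)`.

The linear terms cancel by the equations of motion. What is left of the first two summands is
`-2 ∑ᵢ (W (ϕ + w))ᵢ ((Φ q₁)ᵢ (Φ p₁)ᵢ + (Φ q₂)ᵢ (Φ p₂)ᵢ)`, which is exactly `-(ϕ + w) ⬝ w'`. Sharing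
the basis `W` between `φ`, `ϕ` and `w` is what makes these cancel.
-/

open Matrix BigOperators

theorem hasDerivAt_dotProduct_s18 {r : ℕ} {f g : ℝ → Fin r → ℝ} {f' g' : Fin r → ℝ} {t : ℝ}
    (hf : HasDerivAt f f' t) (hg : HasDerivAt g g' t) :
    HasDerivAt (fun s => f s ⬝ᵥ g s) (f' ⬝ᵥ g t + f t ⬝ᵥ g') t := by
  have h := HasDerivAt.fun_sum (u := Finset.univ) (fun i _ =>
    (hasDerivAt_pi.1 hf i).fun_mul (hasDerivAt_pi.1 hg i))
  simpa only [dotProduct, Finset.sum_add_distrib] using h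

theorem hasDerivAt_mulVec_s18 {r : ℕ} (A : Matrix (Fin r) (Fin r) ℝ) {f : ℝ → Fin r → ℝ}
    {f' : Fin r → ℝ} {t : ℝ} (hf : HasDerivAt f f' t) :
    HasDerivAt (fun s => A *ᵥ f s) (A *ᵥ f') t := by
  refine hasDerivAt_pi.2 fun i => ?_
  simpa [mulVec] using hasDerivAt_dotProduct_s18 (hasDerivAt_const t (A i)) hf

theorem dotProduct_transpose_mulVec' {n r : ℕ} (M : Matrix (Fin n) (Fin r) ℝ)
    (x : Fin r → ℝ) (v : Fin n → ℝ) : x ⬝ᵥ Mᵀ *ᵥ v = M *ᵥ x ⬝ᵥ v := by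
  rw [dotProduct_mulVec, vecMul_transpose]

theorem mulVec_dotProduct_mulVec_of_orthonormal_s18 {n r : ℕ} {M : Matrix (Fin n) (Fin r) ℝ}
    (hM : Mᵀ * M = 1) (x y : Fin r → ℝ) : M *ᵥ x ⬝ᵥ M *ᵥ y = x ⬝ᵥ y := by
  rw [← dotProduct_transpose_mulVec', mulVec_mulVec, hM, one_mulVec]

theorem mulVec_dotProduct_compress {n r : ℕ} (M : Matrix (Fin n) (Fin r) ℝ)
    (D : Matrix (Fin n) (Fin n) ℝ) (x y : Fin r → ℝ) :
    M *ᵥ x ⬝ᵥ D *ᵥ (M *ᵥ y) = x ⬝ᵥ (Mᵀ * D * M) *ᵥ y := by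
  rw [← dotProduct_transpose_mulVec', mulVec_mulVec, mulVec_mulVec]

theorem dotProduct_compress_comm {n r : ℕ} (M : Matrix (Fin n) (Fin r) ℝ)
    {D : Matrix (Fin n) (Fin n) ℝ} (hD : D.IsSymm) (x y : Fin r → ℝ) :
    x ⬝ᵥ (Mᵀ * D * M) *ᵥ y = y ⬝ᵥ (Mᵀ * D * M) *ᵥ x := by
  have hS : (Mᵀ * D * M)ᵀ = Mᵀ * D * M := by
    simp [transpose_mul, hD.eq, Matrix.mul_assoc]
  conv_lhs => rw [← hS, dotProduct_transpose_mulVec', dotProduct_comm]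

/-- The trilinear form `∑ᵢ aᵢ bᵢ cᵢ` is symmetric; this is the identity that matches the
nonlinear force on `p` with the source term of `w`. -/
theorem dotProduct_hadamard_rotate {n : ℕ} (a b c : Fin n → ℝ) :
    c ⬝ᵥ (fun i => a i * b i) = a ⬝ᵥ (fun i => b i * c i) := by
  simp only [dotProduct]
  exact Finset.sum_congr rfl fun i _ => by ring

theorem dotProduct_hadamard_add {n : ℕ} (a b c d e : Fin n → ℝ) :
    a ⬝ᵥ (fun i => b i * c i + d i * e i)
      = a ⬝ᵥ (fun i => b i * c i) + a ⬝ᵥ (fun i => d i * e i) :=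
  dotProduct_add a (fun i => b i * c i) (fun i => d i * e i)

/-- The structure-preserving quadratic ROM of the Klein-Gordon-Zakharov equations, with a
joint orthonormal basis W for φ, ϕ and w, conserves the lifted energy along the
reconstructed trajectory. Here `vphih` plays the role of φ̂ and `phih` of ϕ̂. -/
theorem kgz_rom_conserves_energy
    (n r : ℕ) (hn : 0 < n) (hr : 0 < r)
    (D : Matrix (Fin n) (Fin n) ℝ) (hD : D.IsSymm)
    (Φ W : Matrix (Fin n) (Fin r) ℝ)
    (hΦ : Φᵀ * Φ = 1) (hW : Wᵀ * W = 1)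
    (q1h q2h p1h p2h vphih phih wh : ℝ → Fin r → ℝ)
    (hq1 : ∀ t, HasDerivAt q1h (p1h t) t)
    (hq2 : ∀ t, HasDerivAt q2h (p2h t) t)
    (hp1 : ∀ t, HasDerivAt p1h
      ((Φᵀ * D * Φ).mulVec (q1h t) - q1h t
        - Φᵀ.mulVec (fun i => W.mulVec (phih t) i * Φ.mulVec (q1h t) i)
        - Φᵀ.mulVec (fun i => W.mulVec (wh t) i * Φ.mulVec (q1h t) i)) t)
    (hp2 : ∀ t, HasDerivAt p2h
      ((Φᵀ * D * Φ).mulVec (q2h t) - q2h t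
        - Φᵀ.mulVec (fun i => W.mulVec (phih t) i * Φ.mulVec (q2h t) i)
        - Φᵀ.mulVec (fun i => W.mulVec (wh t) i * Φ.mulVec (q2h t) i)) t)
    (hvphi : ∀ t, HasDerivAt vphih (phih t + wh t) t)
    (hphi : ∀ t, HasDerivAt phih ((Wᵀ * D * W).mulVec (vphih t)) t)
    (hw : ∀ t, HasDerivAt wh
      ((2 : ℝ) • Wᵀ.mulVec (fun i =>
        Φ.mulVec (q1h t) i * Φ.mulVec (p1h t) i
          + Φ.mulVec (q2h t) i * Φ.mulVec (p2h t) i)) t) :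
    ∀ s t : ℝ,
      (Φ.mulVec (p1h s) ⬝ᵥ Φ.mulVec (p1h s)) + (Φ.mulVec (p2h s) ⬝ᵥ Φ.mulVec (p2h s))
        + (Φ.mulVec (q1h s) ⬝ᵥ Φ.mulVec (q1h s)) + (Φ.mulVec (q2h s) ⬝ᵥ Φ.mulVec (q2h s))
        - (Φ.mulVec (q1h s) ⬝ᵥ D.mulVec (Φ.mulVec (q1h s)))
        - (Φ.mulVec (q2h s) ⬝ᵥ D.mulVec (Φ.mulVec (q2h s)))
        + (W.mulVec (phih s) ⬝ᵥ W.mulVec (wh s))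
        - (1 / 2) * (W.mulVec (vphih s) ⬝ᵥ D.mulVec (W.mulVec (vphih s)))
        + (1 / 2) * (W.mulVec (phih s) ⬝ᵥ W.mulVec (phih s))
        + (1 / 2) * (W.mulVec (wh s) ⬝ᵥ W.mulVec (wh s))
      = (Φ.mulVec (p1h t) ⬝ᵥ Φ.mulVec (p1h t)) + (Φ.mulVec (p2h t) ⬝ᵥ Φ.mulVec (p2h t))
        + (Φ.mulVec (q1h t) ⬝ᵥ Φ.mulVec (q1h t)) + (Φ.mulVec (q2h t) ⬝ᵥ Φ.mulVec (q2h t))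
        - (Φ.mulVec (q1h t) ⬝ᵥ D.mulVec (Φ.mulVec (q1h t)))
        - (Φ.mulVec (q2h t) ⬝ᵥ D.mulVec (Φ.mulVec (q2h t)))
        + (W.mulVec (phih t) ⬝ᵥ W.mulVec (wh t))
        - (1 / 2) * (W.mulVec (vphih t) ⬝ᵥ D.mulVec (W.mulVec (vphih t)))
        + (1 / 2) * (W.mulVec (phih t) ⬝ᵥ W.mulVec (phih t))
        + (1 / 2) * (W.mulVec (wh t) ⬝ᵥ W.mulVec (wh t)) := by
  intro s t
  simp only [mulVec_dotProduct_compress, mulVec_dotProduct_mulVec_of_orthonormal_s18 hΦ,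
    mulVec_dotProduct_mulVec_of_orthonormal_s18 hW]
  have key : ∀ x, HasDerivAt (fun s =>
      p1h s ⬝ᵥ p1h s + p2h s ⬝ᵥ p2h s + q1h s ⬝ᵥ q1h s + q2h s ⬝ᵥ q2h s
        - q1h s ⬝ᵥ (Φᵀ * D * Φ) *ᵥ q1h s - q2h s ⬝ᵥ (Φᵀ * D * Φ) *ᵥ q2h s
        + phih s ⬝ᵥ wh s - (1 / 2) * (vphih s ⬝ᵥ (Wᵀ * D * W) *ᵥ vphih s)
        + (1 / 2) * (phih s ⬝ᵥ phih s) + (1 / 2) * (wh s ⬝ᵥ wh s)) 0 x := by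
    intro x
    have hE := (((((((((hasDerivAt_dotProduct_s18 (hp1 x) (hp1 x)).fun_add
      (hasDerivAt_dotProduct_s18 (hp2 x) (hp2 x))).fun_add
      (hasDerivAt_dotProduct_s18 (hq1 x) (hq1 x))).fun_add
      (hasDerivAt_dotProduct_s18 (hq2 x) (hq2 x))).fun_sub
      (hasDerivAt_dotProduct_s18 (hq1 x) (hasDerivAt_mulVec_s18 (Φᵀ * D * Φ) (hq1 x)))).fun_sub
      (hasDerivAt_dotProduct_s18 (hq2 x) (hasDerivAt_mulVec_s18 (Φᵀ * D * Φ) (hq2 x)))).fun_add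
      (hasDerivAt_dotProduct_s18 (hphi x) (hw x))).fun_sub
      ((hasDerivAt_dotProduct_s18 (hvphi x)
        (hasDerivAt_mulVec_s18 (Wᵀ * D * W) (hvphi x))).const_mul (1 / 2))).fun_add
      ((hasDerivAt_dotProduct_s18 (hphi x) (hphi x)).const_mul (1 / 2))).fun_add
      ((hasDerivAt_dotProduct_s18 (hw x) (hw x)).const_mul (1 / 2))
    refine hE.congr_deriv ?_
    -- Products are put in the order `p ⬝ p'`, `w ⬝ w'`, ..., so that like terms match syntactically.
    rw [dotProduct_comm _ (p1h x), dotProduct_comm _ (p2h x), dotProduct_comm _ (wh x),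
      dotProduct_comm _ (phih x), dotProduct_comm (_ • _) (wh x),
      dotProduct_compress_comm Φ hD (q1h x) (p1h x),
      dotProduct_compress_comm Φ hD (q2h x) (p2h x),
      dotProduct_compress_comm W hD (vphih x) (phih x + wh x)]
    simp only [dotProduct_sub, dotProduct_smul, add_dotProduct, smul_eq_mul,
      dotProduct_transpose_mulVec', dotProduct_hadamard_add]
    rw [dotProduct_hadamard_rotate (W *ᵥ phih x) (Φ *ᵥ q1h x) (Φ *ᵥ p1h x),
      dotProduct_hadamard_rotate (W *ᵥ phih x) (Φ *ᵥ q2h x) (Φ *ᵥ p2h x),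
      dotProduct_hadamard_rotate (W *ᵥ wh x) (Φ *ᵥ q1h x) (Φ *ᵥ p1h x),
      dotProduct_hadamard_rotate (W *ᵥ wh x) (Φ *ᵥ q2h x) (Φ *ᵥ p2h x),
      dotProduct_comm (p1h x) (q1h x), dotProduct_comm (p2h x) (q2h x)]
    ring
  exact is_const_of_deriv_eq_zero (fun x => (key x).differentiableAt) (fun x => (key x).deriv) s t
end
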